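/- Let q ≥ 2 and 1 ≤ p < q be integers. For every sequence (n'_i)_{i∈ℕ} of positive integers there exists a sequence (n_i)_{i∈ℕ} of positive integers with the following property: for every q-uniform hypergraph H on a vertex set V and every sequence (V_i)_{i∈ℕ} of pairwise disjoint finite subsets of V with |V_i| ≥ n_i for all i, there exists a subsequence of subsets (V'_i)_{i∈ℕ} of (V_i)_{i∈ℕ} such that |V'_i| ≥ n'_i for all i, and H together with (V'_i)_{i∈ℕ} is p-homogeneous. -/

import Mathlib

/-- `H` is a `q`-uniform hypergraph on vertex set `V`: every edge has exactly `q` vertices. -/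
def IsUniform {V : Type*} (q : ℕ) (H : Set (Finset V)) : Prop :=
  ∀ e ∈ H, e.card = q

/-- `v` is an increasing `p`-tuple of the sequence of sets `Vs`: there are indices
`i_1 < i_2 < … < i_p` with `v j ∈ Vs (i_j)` for each `j`. -/
def IsIncrTuple {V : Type*} {p : ℕ} (Vs : ℕ → Finset V) (v : Fin p → V) : Prop :=
  ∃ idx : Fin p → ℕ, StrictMono idx ∧ ∀ j, v j ∈ Vs (idx j)

/-- The vertex set `{w 0, …, w (q-1)}` of a `q`-tuple, as a finset. -/
noncomputable def tupleEdge {V : Type*} {q : ℕ} (w : Fin q → V) : Finset V :=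
  @Finset.image _ _ (Classical.decEq V) w Finset.univ

/-- `H` is homogeneous with respect to the increasing `p`-tuple `v` of `Vs` (`p ≤ q`):
either every increasing `q`-tuple of `Vs` extending `v` spans an edge,
or none of them does. -/
def HomogWrt {V : Type*} (q : ℕ) (H : Set (Finset V)) (Vs : ℕ → Finset V)
    {p : ℕ} (hpq : p ≤ q) (v : Fin p → V) : Prop :=
  (∀ w : Fin q → V, IsIncrTuple Vs w → (∀ j : Fin p, w (Fin.castLE hpq j) = v j) →
      tupleEdge w ∈ H) ∨
  (∀ w : Fin q → V, IsIncrTuple Vs w → (∀ j : Fin p, w (Fin.castLE hpq j) = v j) →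
      tupleEdge w ∉ H)

/-- `H` together with `Vs` is `p`-homogeneous: it is homogeneous with respect to
every increasing `p`-tuple of `Vs`. -/
def PHomog {V : Type*} (q : ℕ) (H : Set (Finset V)) (Vs : ℕ → Finset V)
    (p : ℕ) (hpq : p ≤ q) : Prop :=
  ∀ v : Fin p → V, IsIncrTuple Vs v → HomogWrt q H Vs hpq v

/-- `Vs'` is a subsequence of subsets of `Vs`: there are indices `i_1 < i_2 < …`
with `Vs' j ⊆ Vs (i_j)` for every `j`. -/
def SubseqOfSubsets {V : Type*} (Vs Vs' : ℕ → Finset V) : Prop :=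
  ∃ idx : ℕ → ℕ, StrictMono idx ∧ ∀ j, Vs' j ⊆ Vs (idx j)

/-!
The proof is an induction on `q` for arbitrary finite colourings of `q`-tuples; it makes all
increasing `q`-tuples monochromatic at once.

To pass from `q + 1` to `q`, the last vertex is made irrelevant in two rounds. First, going through
the sets from left to right, shrink each one to a prescribed size such that every tuple of `q`
vertices from the earlier sets is extended with the same colour by all vertices of the current set;
since the earlier sets have already been shrunk, the pigeonhole loss is bounded in advance. Each
tuple now sees one colour per later set, and a limit along a nonprincipal ultrafilter followed by
a diagonal choice of indices makes that colour independent of the set as well. What remains is a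
colouring of `q`-tuples.
-/

universe u

open Filter

section Subsequences

variable {V : Type*} {A B C : ℕ → Finset V}

lemma SubseqOfSubsets.refl (A : ℕ → Finset V) : SubseqOfSubsets A A :=
  ⟨id, strictMono_id, fun _ => subset_rfl⟩

lemma SubseqOfSubsets.trans (hAB : SubseqOfSubsets A B) (hBC : SubseqOfSubsets B C) :
    SubseqOfSubsets A C := by
  obtain ⟨φ, hφ, hB⟩ := hAB
  obtain ⟨ψ, hψ, hC⟩ := hBC
  exact ⟨φ ∘ ψ, hφ.comp hψ, fun j => (hC j).trans (hB _)⟩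

lemma IsIncrTuple.of_subseqOfSubsets {q : ℕ} {w : Fin q → V} (hw : IsIncrTuple B w)
    (hAB : SubseqOfSubsets A B) : IsIncrTuple A w := by
  obtain ⟨φ, hφ, hB⟩ := hAB
  obtain ⟨idx, hidx, hmem⟩ := hw
  exact ⟨φ ∘ idx, hφ.comp hidx, fun j => hB _ (hmem j)⟩

lemma IsIncrTuple.init {q : ℕ} {w : Fin (q + 1) → V} (hw : IsIncrTuple A w) :
    IsIncrTuple A (Fin.init w) := by
  obtain ⟨idx, hidx, hmem⟩ := hw
  exact ⟨idx ∘ Fin.castSucc, hidx.comp Fin.strictMono_castSucc, fun j => hmem j.castSucc⟩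

end Subsequences

open Classical in
/-- The finite set of all `q`-tuples, increasing or not, with entries in `⋃ j < i, W j`: the tuples
that the set `W i` can extend. -/
noncomputable def tuplesBelow {V : Type*} (q : ℕ) (W : ℕ → Finset V) (i : ℕ) :
    Finset (Fin q → V) :=
  Fintype.piFinset fun _ => (Finset.range i).biUnion W

lemma mem_tuplesBelow {V : Type*} {q : ℕ} {W : ℕ → Finset V} {i : ℕ} {v : Fin q → V} :
    v ∈ tuplesBelow q W i ↔ ∀ t, ∃ j < i, v t ∈ W j := by
  simp only [tuplesBelow, Fintype.mem_piFinset, Finset.mem_biUnion, Finset.mem_range]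

lemma exists_subset_card_eq_forall_colour_eq {ι α κ : Type*} [Fintype κ] [Nonempty κ]
    (c : ι → α → κ) (T : Finset ι) {A : Finset α} {m : ℕ}
    (hA : m * Fintype.card κ ^ T.card ≤ A.card) :
    ∃ S ⊆ A, S.card = m ∧ ∃ d : ι → κ, ∀ v ∈ T, ∀ x ∈ S, c v x = d v := by
  classical
  obtain ⟨d, -, hd⟩ := Finset.exists_le_card_fiber_of_mul_le_card_of_maps_to
    (s := A) (t := Finset.univ) (f := fun x (v : T) => c v x) (n := m)
    (fun _ _ => Finset.mem_univ _) Finset.univ_nonempty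
    (by rwa [Finset.card_univ, Fintype.card_fun, Fintype.card_coe, mul_comm])
  obtain ⟨S, hS, hcard⟩ := Finset.exists_subset_card_eq hd
  refine ⟨S, hS.trans (Finset.filter_subset _ _), hcard,
    fun v => if hv : v ∈ T then d ⟨v, hv⟩ else Classical.arbitrary κ, fun v hv x hx => ?_⟩
  have hcolour : (fun u : T => c u x) = d := (Finset.mem_filter.1 (hS hx)).2
  simpa only [dif_pos hv] using congrFun hcolour ⟨v, hv⟩

lemma exists_seq_finset_of_forall_biUnion {α : Type*} [DecidableEq α] (m : ℕ → ℕ)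
    (R : ℕ → Finset α → Finset α → Prop)
    (h : ∀ i U, U.card ≤ ∑ j ∈ Finset.range i, m j → ∃ S, S.card = m i ∧ R i U S) :
    ∃ W : ℕ → Finset α, ∀ i, (W i).card = m i ∧ R i ((Finset.range i).biUnion W) (W i) := by
  choose! F hF using h
  let U : ℕ → Finset α := fun i => Nat.rec ∅ (fun i U => F i U ∪ U) i
  have hU (i : ℕ) : (Finset.range i).biUnion (fun j => F j (U j)) = U i := by
    induction i with
    | zero => rfl
    | succ i ih => rw [Finset.range_add_one, Finset.biUnion_insert, ih]
  have hcard (i : ℕ) : (U i).card ≤ ∑ j ∈ Finset.range i, m j := by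
    induction i with
    | zero => rfl
    | succ i ih =>
      rw [Finset.sum_range_succ_comm]
      exact (Finset.card_union_le _ _).trans (add_le_add (hF i _ ih).1.le ih)
  exact ⟨fun i => F i (U i), fun i => by rw [hU]; exact hF i _ (hcard i)⟩

lemma exists_subsets_forall_colour_eq {V κ : Type*} [Fintype κ] [Nonempty κ] {q : ℕ}
    (c : (Fin q → V) → V → κ) (m : ℕ → ℕ) {A : ℕ → Finset V}
    (hA : ∀ i, m i * Fintype.card κ ^ (∑ j ∈ Finset.range i, m j) ^ q ≤ (A i).card) :
    ∃ W : ℕ → Finset V, (∀ i, W i ⊆ A i) ∧ (∀ i, (W i).card = m i) ∧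
      ∃ d : ℕ → (Fin q → V) → κ, ∀ i, ∀ v ∈ tuplesBelow q W i, ∀ x ∈ W i, c v x = d i v := by
  classical
  obtain ⟨W, hW⟩ := exists_seq_finset_of_forall_biUnion m
    (fun i U S => S ⊆ A i ∧ ∃ d : (Fin q → V) → κ,
      ∀ v : Fin q → V, (∀ t, v t ∈ U) → ∀ x ∈ S, c v x = d v) fun i U hU => by
    have hloss : m i * Fintype.card κ ^ (Fintype.piFinset fun _ : Fin q => U).card ≤
        (A i).card := by
      rw [Fintype.card_piFinset_const]
      refine le_trans ?_ (hA i)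
      gcongr
      exact Fintype.card_pos
    obtain ⟨S, hSA, hS, d, hd⟩ := exists_subset_card_eq_forall_colour_eq c _ hloss
    exact ⟨S, hS, hSA, d, fun v hv => hd v (Fintype.mem_piFinset.2 hv)⟩
  choose hcard hsub d hd using hW
  refine ⟨W, hsub, hcard, d, fun i v hv => hd i v ?_⟩
  simpa only [Finset.mem_biUnion, Finset.mem_range] using mem_tuplesBelow.1 hv

lemma exists_strictMono_forall_lt_colour_eq {ι κ : Type*} [Finite κ] (d : ℕ → ι → κ)
    (T : ℕ → Finset ι) :
    ∃ φ : ℕ → ℕ, StrictMono φ ∧ ∃ D : ι → κ, ∀ i j, i < j → ∀ v ∈ T (φ i), d (φ j) v = D v := by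
  have hlim (v : ι) : ∃ k, ∀ᶠ j in hyperfilter ℕ, d j v = k := by
    obtain ⟨k, hk⟩ := ((hyperfilter ℕ).map (d · v)).eq_pure_of_finite
    have hmem : {k} ∈ (hyperfilter ℕ).map (d · v) := by rw [hk]; exact Ultrafilter.mem_pure.2 rfl
    exact ⟨k, hmem⟩
  choose D hD using hlim
  obtain ⟨φ, -, hφ⟩ := exists_seq_of_forall_finset_exists (fun _ => True)
    (fun i j => i < j ∧ ∀ v ∈ T i, d j v = D v) fun s _ => by
    have hlate (i : ℕ) : ∀ᶠ j in hyperfilter ℕ, i < j ∧ ∀ v ∈ T i, d j v = D v :=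
      ((eventually_gt_atTop i).filter_mono Nat.hyperfilter_le_atTop).and
        ((eventually_all_finset _).2 fun v _ => hD v)
    obtain ⟨j, hj⟩ := ((eventually_all_finset s).2 fun i _ => hlate i).exists
    exact ⟨j, trivial, hj⟩
  exact ⟨φ, fun i j hij => (hφ i j hij).1, D, fun i j hij => (hφ i j hij).2⟩

theorem exists_subseqOfSubsets_colour_eq_init (κ : Type*) [Finite κ] [Nonempty κ] (q : ℕ)
    (m : ℕ → ℕ) :
    ∃ n : ℕ → ℕ, ∀ (V : Type u) (c : (Fin (q + 1) → V) → κ) (A : ℕ → Finset V),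
      (∀ i, n i ≤ (A i).card) →
      ∃ B, SubseqOfSubsets A B ∧ (∀ i, m i ≤ (B i).card) ∧
        ∃ D : (Fin q → V) → κ, ∀ w, IsIncrTuple B w → c w = D (Fin.init w) := by
  have := Fintype.ofFinite κ
  -- A monotone size sequence survives the passage to later indices.
  let M := partialSups m
  refine ⟨fun i => M i * Fintype.card κ ^ (∑ j ∈ Finset.range i, M j) ^ q, fun V c A hA => ?_⟩
  obtain ⟨W, hWA, hWcard, d, hd⟩ :=
    exists_subsets_forall_colour_eq (fun v x => c (Fin.snoc (α := fun _ => V) v x)) M hA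
  obtain ⟨φ, hφ, D, hD⟩ :=
    exists_strictMono_forall_lt_colour_eq d (fun i => tuplesBelow q W (i + 1))
  -- The shift by one leaves room below index `0` for the empty tuple when `q = 0`.
  have hshift : StrictMono fun i => φ (i + 1) := fun i j hij => hφ (by lia)
  refine ⟨fun i => W (φ (i + 1)), ⟨_, hshift, fun i => hWA _⟩, fun i => ?_, D, ?_⟩
  · rw [hWcard]
    exact (le_partialSups m i).trans (M.monotone hshift.le_apply)
  · rintro w ⟨idx, hidx, hmem⟩
    have hbelow {n : ℕ} (hn : φ (idx (Fin.last q)) < n) : Fin.init w ∈ tuplesBelow q W n :=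
      mem_tuplesBelow.2 fun t => ⟨φ (idx t.castSucc + 1),
        (hφ.monotone (hidx t.castSucc_lt_last)).trans_lt hn, hmem t.castSucc⟩
    calc c w = c (Fin.snoc (α := fun _ => V) (Fin.init w) (w (Fin.last q))) := by
          rw [Fin.snoc_init_self]
      _ = d (φ (idx (Fin.last q) + 1)) (Fin.init w) :=
          hd _ _ (hbelow (hφ (Nat.lt_succ_self _))) _ (hmem _)
      _ = D (Fin.init w) := hD _ _ (Nat.lt_succ_self _) _ (hbelow (Nat.lt_succ_self _))

theorem exists_subseqOfSubsets_monochromatic (κ : Type*) [Finite κ] [Nonempty κ] (q : ℕ)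
    (m : ℕ → ℕ) :
    ∃ n : ℕ → ℕ, ∀ (V : Type u) (c : (Fin q → V) → κ) (A : ℕ → Finset V),
      (∀ i, n i ≤ (A i).card) →
      ∃ B, SubseqOfSubsets A B ∧ (∀ i, m i ≤ (B i).card) ∧ ∃ k, ∀ w, IsIncrTuple B w → c w = k := by
  induction q with
  | zero =>
    exact ⟨m, fun V c A hA => ⟨A, .refl A, hA, c Fin.elim0, fun w _ => by
      rw [Subsingleton.elim w Fin.elim0]⟩⟩
  | succ q ih =>
    obtain ⟨n₁, hn₁⟩ := ih
    obtain ⟨n, hn⟩ := exists_subseqOfSubsets_colour_eq_init κ q n₁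
    refine ⟨n, fun V c A hA => ?_⟩
    obtain ⟨B, hAB, hB, D, hD⟩ := hn V c A hA
    obtain ⟨C, hBC, hC, k, hk⟩ := hn₁ V D B hB
    exact ⟨C, hAB.trans hBC, hC, k, fun w hw =>
      (hD w (hw.of_subseqOfSubsets hBC)).trans (hk _ hw.init)⟩

theorem stmt_6_general (q : ℕ) (n' : ℕ → ℕ) :
    ∃ n : ℕ → ℕ, (∀ i, 0 < n i) ∧
      ∀ (V : Type u) (H : Set (Finset V)) (Vs : ℕ → Finset V), (∀ i, n i ≤ (Vs i).card) →
        ∃ Vs' : ℕ → Finset V, SubseqOfSubsets Vs Vs' ∧ (∀ i, n' i ≤ (Vs' i).card) ∧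
          ∀ (p : ℕ) (hpq : p ≤ q), PHomog q H Vs' p hpq := by
  obtain ⟨n, hn⟩ := exists_subseqOfSubsets_monochromatic Prop q n'
  refine ⟨fun i => n i + 1, fun i => Nat.succ_pos _, fun V H Vs hVs => ?_⟩
  obtain ⟨Vs', hsub, hcard, k, hk⟩ :=
    hn V (fun w => tupleEdge w ∈ H) Vs fun i => (Nat.le_succ _).trans (hVs i)
  refine ⟨Vs', hsub, hcard, fun p hpq v _ => ?_⟩
  by_cases hedge : k
  · exact .inl fun w hw _ => (hk w hw).mpr hedge
  · exact .inr fun w hw _ hwH => hedge ((hk w hw).mp hwH)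

/-- For all `q ≥ 2`, `1 ≤ p < q` and every sequence `n'` of positive
integers there is a sequence `n` of positive integers such that: for every `q`-uniform
hypergraph `H` and pairwise disjoint finite vertex sets `Vs` with `|Vs i| ≥ n i`,
there is a subsequence of subsets `Vs'` with `|Vs' i| ≥ n' i` for all `i` such that
`H` together with `Vs'` is `p`-homogeneous. -/
theorem stmt_6 (q p : ℕ) (hq : 2 ≤ q) (hp : 1 ≤ p) (hpq : p < q)
    (n' : ℕ → ℕ) (hn' : ∀ i, 0 < n' i) :
    ∃ n : ℕ → ℕ, (∀ i, 0 < n i) ∧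
      ∀ (V : Type) (H : Set (Finset V)), IsUniform q H →
        ∀ Vs : ℕ → Finset V, (∀ i j, i ≠ j → Disjoint (Vs i) (Vs j)) →
          (∀ i, n i ≤ (Vs i).card) →
          ∃ Vs' : ℕ → Finset V, SubseqOfSubsets Vs Vs' ∧
            (∀ i, n' i ≤ (Vs' i).card) ∧
            PHomog q H Vs' p (le_of_lt hpq) := by
  obtain ⟨n, hpos, hn⟩ := stmt_6_general q n'
  exact ⟨n, hpos, fun V H _ Vs _ hVs => (hn V H Vs hVs).imp fun _ h => ⟨h.1, h.2.1, h.2.2 p hpq.le⟩⟩
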